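/- Let w be a finite word of length n. For 1 ≤ q ≤ n let sc_q(w) denote the number of conjugacy classes of primitive words u with |u| ≤ q for which the small-circuit condition SC_w(u,q) holds. Then the sum over q from 1 to n of sc_q(w) is at most n. -/

import Mathlib

/-!
For each `q` consider the Rauzy graph of order `q` of `w`: its vertices are the factors of
length `q`, its edges the factors `e` of length `q + 1`, joining `e.dropLast` to `e.tail`.
A primitive word `u` with `SC w u q` traces a closed walk of length `|u| ≤ q` in this graph.

Every primitive word has an unbordered conjugate `p`, namely its lexicographically least one
(`exists_unbordered`). Choose one such `p` for each conjugacy class counted by `sc_q(w)` and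
attach to the class the edge `e_p`, the prefix of length `q + 1` of `p^ω`. Since `e_p` starts
with an unbordered word of length `|p|`, it has no period smaller than `|p|`; hence the circuit
of `p` traverses `e_p` only once, and no other circuit of length at most `|p|` traverses it. So
distinct classes have distinct special edges, and, by induction on `|p|`, the endpoints of `e_p`
remain connected when all special edges are deleted. The Rauzy graph is connected (walk along
`w`), so it stays connected after deletion of the special edges, which gives
`|Fac_q(w)| ≤ |Fac_{q+1}(w)| - sc_q(w) + 1` (`key_inequality`). Summing over `q` telescopes, and
`Fac_{n+1}(w)` is empty.

Connectedness is handled through functions on vertices: a graph is connected when functions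
constant along its edges are constant, and the inequality between the numbers of vertices and
edges is then rank-nullity (`card_vertices_le`).
-/

/-- `wpow u k` is the concatenation of `k` copies of the word `u`. -/
def wpow {α : Type*} (u : List α) : ℕ → List α
  | 0 => []
  | n + 1 => u ++ wpow u n

/-- A nonempty word is primitive if it is not a `k`-th power, `k ≥ 2`, of any word. -/
def Primitive {α : Type*} (u : List α) : Prop :=
  u ≠ [] ∧ ∀ (v : List α) (k : ℕ), 2 ≤ k → u ≠ wpow v k

/-- `v` is a rational power of exponent at least 2 of the nonempty word `p`:
`v = p^k p'` with `k ≥ 2` an integer and `p'` a (possibly empty) proper prefix of `p`. -/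
def IsRatPow {α : Type*} (p v : List α) : Prop :=
  p ≠ [] ∧ ∃ (k : ℕ) (p' : List α), 2 ≤ k ∧ p' <+: p ∧ p' ≠ p ∧ v = wpow p k ++ p'

/-- Two words are conjugate. -/
def Conj {α : Type*} (u v : List α) : Prop :=
  ∃ x y, u = x ++ y ∧ v = y ++ x

/-- The set of factors of a word. -/
def Fac {α : Type*} (w : List α) : Set (List α) := {v | v <:+: w}

/-- `PerFac u i` is the set `[u]_i` of length-`i` factors of the infinite periodic
word `u^ω` (equivalently, of `u^(i+1)` when `u` is nonempty). -/
def PerFac {α : Type*} (u : List α) (i : ℕ) : Set (List α) :=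
  {v | v.length = i ∧ v <:+: wpow u (i + 1)}

/-- The small-circuit condition `SC_w(u,q)`: `q ≥ |u|`, `[u]_q ⊆ Fac(w)` and
`[u]_{q+1} ⊆ Fac(w)`. -/
def SC {α : Type*} (w u : List α) (q : ℕ) : Prop :=
  u.length ≤ q ∧ PerFac u q ⊆ Fac w ∧ PerFac u (q + 1) ⊆ Fac w

/-- `M(u)`: the number of integers `q` for which `SC_w(u,q)` holds. -/
noncomputable def Mnum {α : Type*} (w u : List α) : ℕ :=
  Set.ncard {q : ℕ | SC w u q}

/-- `QClass_w(u)`: the set of factors of `w` that are rational powers of exponent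
at least 2 of some conjugate of `u`. -/
def QClass {α : Type*} (w u : List α) : Set (List α) :=
  {v | v <:+: w ∧ ∃ p, Conj u p ∧ IsRatPow p v}

/-- `RP(w)`: the number of distinct factors of `w` that are rational powers of
exponent at least 2 of some nonempty word. -/
noncomputable def RP {α : Type*} (w : List α) : ℕ :=
  Set.ncard {v | v <:+: w ∧ ∃ p, IsRatPow p v}

/-! ### Factors of periodic words -/

/-- The `i`-th letter of the periodic word `u^ω`. -/
def per {α : Type*} [Inhabited α] (u : List α) (i : ℕ) : α := u[i % u.length]!

/-- The factor of length `L` of `u^ω` that starts at position `i`. -/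
def perWord {α : Type*} [Inhabited α] (u : List α) (i L : ℕ) : List α :=
  (List.range L).map fun j => per u (i + j)

/-- `p` is unbordered: no `i` with `0 < i < |p|` is a period of `p`. -/
def Unbordered {α : Type*} [Inhabited α] (p : List α) : Prop :=
  ∀ i, 0 < i → i < p.length → ∃ j, i + j < p.length ∧ per p (i + j) ≠ per p j

/-- The factors of length `q` of `w`. -/
def facLen {α : Type*} (w : List α) (q : ℕ) : Set (List α) := {v | v.length = q ∧ v <:+: w}

section Periodic

variable {α : Type*} [Inhabited α]

lemma per_eq_getElem (u : List α) (i : ℕ) (h : i < u.length) : per u i = u[i] := by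
  simp [per, Nat.mod_eq_of_lt h, h]

lemma per_add_length (u : List α) (i : ℕ) : per u (i + u.length) = per u i := by
  simp [per]

@[simp] lemma perWord_length (u : List α) (i L : ℕ) : (perWord u i L).length = L := by
  simp [perWord]

lemma perWord_getElem (u : List α) (i L j : ℕ) (h : j < (perWord u i L).length) :
    (perWord u i L)[j] = per u (i + j) := by
  simp [perWord]

lemma perWord_add (u : List α) (i a b : ℕ) :
    perWord u i (a + b) = perWord u i a ++ perWord u (i + a) b := by
  simp [perWord, List.range_add, Function.comp_def, add_assoc]

lemma perWord_add_length (u : List α) (i L : ℕ) :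
    perWord u (i + u.length) L = perWord u i L := by
  simp only [perWord]
  congr 1
  funext j
  rw [add_right_comm, per_add_length]

lemma perWord_self (u : List α) : perWord u 0 u.length = u := by
  apply List.ext_getElem (by simp)
  intro j h1 h2
  rw [perWord_getElem, zero_add, per_eq_getElem]

lemma wpow_eq_perWord (u : List α) (k : ℕ) : wpow u k = perWord u 0 (k * u.length) := by
  induction k with
  | zero => simp [wpow, perWord]
  | succ k ih =>
    rw [wpow, ih, show (k + 1) * u.length = u.length + k * u.length by ring, perWord_add,
      perWord_self, perWord_add_length]

lemma perWord_tail (u : List α) (i L : ℕ) :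
    (perWord u i (L + 1)).tail = perWord u (i + 1) L := by
  rw [add_comm L 1, perWord_add]
  simp [perWord]

lemma perWord_dropLast (u : List α) (i L : ℕ) :
    (perWord u i (L + 1)).dropLast = perWord u i L := by
  rw [perWord_add]
  simp [perWord]

lemma perWord_mod (u : List α) (i L : ℕ) : perWord u (i % u.length) L = perWord u i L := by
  simp [perWord, per]

lemma mem_perFac_iff (u : List α) (hu : u ≠ []) (L : ℕ) (v : List α) :
    v ∈ PerFac u L ↔ ∃ i, v = perWord u i L := by
  have hpos : 0 < u.length := List.length_pos_iff.2 hu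
  constructor
  · rintro ⟨hl, s, t, h⟩
    refine ⟨s.length, ?_⟩
    rw [wpow_eq_perWord] at h
    have hlen := congrArg List.length h
    simp only [List.length_append, perWord_length] at hlen
    rw [← hlen, perWord_add, perWord_add] at h
    have h1 := (List.append_inj h (by simp)).1
    have h2 := (List.append_inj h1 (by simp)).2
    rw [h2, hl, zero_add]
  · rintro ⟨i, rfl⟩
    rw [← perWord_mod]
    refine ⟨by simp, ?_⟩
    have hi : i % u.length < u.length := Nat.mod_lt _ hpos
    obtain ⟨c, hc⟩ : ∃ c, (L + 1) * u.length = i % u.length + L + c := by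
      apply Nat.exists_eq_add_of_le
      nlinarith
    rw [wpow_eq_perWord, hc, perWord_add, perWord_add, zero_add]
    exact ⟨_, _, rfl⟩

lemma per_rotate (u : List α) (k i : ℕ) : per (u.rotate k) i = per u (i + k) := by
  by_cases hu : u = []
  · subst hu; simp [per]
  have hpos : 0 < u.length := List.length_pos_iff.2 hu
  have h1 : i % u.length < u.length := Nat.mod_lt _ hpos
  have h2 : (i + k) % u.length < u.length := Nat.mod_lt _ hpos
  simp [per, h1, h2, List.getElem_rotate]

lemma perWord_rotate (u : List α) (k i L : ℕ) :
    perWord (u.rotate k) i L = perWord u (i + k) L := by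
  simp [perWord, per_rotate, add_right_comm]

lemma conj_iff_isRotated {β : Type*} (u v : List β) : Conj u v ↔ u ~r v := by
  constructor
  · rintro ⟨x, y, rfl, rfl⟩
    exact List.isRotated_append
  · rintro ⟨k, rfl⟩
    refine ⟨u.take (k % u.length), u.drop (k % u.length), by simp, ?_⟩
    exact List.rotate_eq_drop_append_take_mod

lemma SC_rotate (w u : List α) (hu : u ≠ []) (k q : ℕ) (h : SC w u q) :
    SC w (u.rotate k) q := by
  have hr : u.rotate k ≠ [] := by simpa [List.rotate_eq_nil_iff] using hu
  have key : ∀ L, PerFac (u.rotate k) L ⊆ PerFac u L := by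
    intro L v hv
    rw [mem_perFac_iff _ hr] at hv
    obtain ⟨i, rfl⟩ := hv
    rw [mem_perFac_iff _ hu, perWord_rotate]
    exact ⟨_, rfl⟩
  exact ⟨by simpa using h.1, (key _).trans h.2.1, (key _).trans h.2.2⟩

end Periodic

/-! ### Unbordered conjugates of primitive words -/

lemma wpow_add {α : Type*} (z : List α) (k l : ℕ) : wpow z (k + l) = wpow z k ++ wpow z l := by
  induction k with
  | zero => simp [wpow]
  | succ k ih => rw [Nat.succ_add, wpow, ih, wpow, List.append_assoc]

lemma exists_wpow_of_commute {α : Type*} (N : ℕ) : ∀ x y : List α, x.length + y.length ≤ N →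
    x ++ y = y ++ x → ∃ z k l, x = wpow z k ∧ y = wpow z l := by
  induction N with
  | zero =>
    intro x y h _
    have hx : x = [] := List.length_eq_zero_iff.1 (by omega)
    have hy : y = [] := List.length_eq_zero_iff.1 (by omega)
    exact ⟨[], 0, 0, by simp [hx, wpow], by simp [hy, wpow]⟩
  | succ N ih =>
    -- the shorter of the two words is a prefix of the other; strip it off
    have main : ∀ x y : List α, x.length + y.length ≤ N + 1 → x.length ≤ y.length →
        x ++ y = y ++ x → ∃ z k l, x = wpow z k ∧ y = wpow z l := by
      intro x y h hle hxy
      by_cases hx : x = []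
      · exact ⟨y, 0, 1, by simp [hx, wpow], by simp [wpow]⟩
      have hpos : 0 < x.length := List.length_pos_iff.2 hx
      obtain ⟨t, rfl⟩ : x <+: y :=
        List.prefix_of_prefix_length_le ⟨y, hxy⟩ ⟨x, rfl⟩ hle
      rw [List.append_assoc] at hxy
      have hxt := List.append_cancel_left hxy
      obtain ⟨z, k, l, h1, h2⟩ := ih x t (by simp at h; omega) hxt
      exact ⟨z, k, k + l, h1, by rw [wpow_add, ← h1, ← h2]⟩
    intro x y h hxy
    rcases le_total x.length y.length with hle | hle
    · exact main x y h hle hxy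
    · obtain ⟨z, k, l, h1, h2⟩ := main y x (by omega) hle hxy.symm
      exact ⟨z, l, k, h2, h1⟩

lemma append_lt_append_left {α : Type*} [LinearOrder α] (b x y : List α) (h : x < y) :
    b ++ x < b ++ y := by
  induction b with
  | nil => simpa
  | cons a b ih => simpa [List.cons_lt_cons_iff] using ih

lemma append_lt_append_right {α : Type*} [LinearOrder α] (b : List α) :
    ∀ x y : List α, x.length = y.length → x < y → x ++ b < y ++ b
  | [], [], _, h => absurd h (lt_irrefl _)
  | [], _ :: _, hl, _ => by simp at hl
  | _ :: _, [], hl, _ => by simp at hl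
  | a :: x, c :: y, hl, h => by
    rw [List.cons_lt_cons_iff] at h
    rw [List.cons_append, List.cons_append, List.cons_lt_cons_iff]
    rcases h with h | ⟨h1, h2⟩
    · exact Or.inl h
    · exact Or.inr ⟨h1, append_lt_append_right b x y (by simpa using hl) h2⟩

lemma Primitive.not_commute {α : Type*} {x y : List α} (h : Primitive (x ++ y))
    (hx : x ≠ []) (hy : y ≠ []) : x ++ y ≠ y ++ x := by
  intro hxy
  obtain ⟨z, k, l, rfl, rfl⟩ := exists_wpow_of_commute _ x y le_rfl hxy
  have hk : k ≠ 0 := by rintro rfl; exact hx rfl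
  have hl : l ≠ 0 := by rintro rfl; exact hy rfl
  exact h.2 z (k + l) (by omega) (wpow_add z k l).symm

lemma wpow_cons_append {α : Type*} (a : α) (t : List α) (m : ℕ) :
    wpow (a :: t) m ++ [a] = a :: wpow (t ++ [a]) m := by
  induction m with
  | zero => simp [wpow]
  | succ m ih => simp [wpow, ih]

lemma rotate_wpow {α : Type*} (v : List α) (m k : ℕ) :
    (wpow v m).rotate k = wpow (v.rotate k) m := by
  have one : ∀ v : List α, (wpow v m).rotate 1 = wpow (v.rotate 1) m := by
    intro v
    cases m with
    | zero => simp [wpow]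
    | succ m =>
      cases v with
      | nil =>
        have : ∀ m, wpow ([] : List α) m = [] := by
          intro m
          induction m with
          | zero => rfl
          | succ m ih => simp [wpow, ih]
        simp [this]
      | cons a t => simp [wpow, wpow_cons_append]
  induction k with
  | zero => simp
  | succ k ih => rw [← List.rotate_rotate, ih, one, List.rotate_rotate]

lemma Primitive.rotate {α : Type*} {u : List α} (h : Primitive u) (k : ℕ) :
    Primitive (u.rotate k) := by
  refine ⟨by simpa [List.rotate_eq_nil_iff] using h.1, ?_⟩
  intro v m hm hv
  obtain ⟨k', hk'⟩ : u.rotate k ~r u := List.IsRotated.symm ⟨k, rfl⟩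
  rw [hv, rotate_wpow] at hk'
  exact h.2 _ m hm hk'.symm

lemma exists_unbordered {α : Type*} [Inhabited α] (u : List α) (h : Primitive u) :
    ∃ k, Unbordered (u.rotate k) := by
  classical
  let _ : LinearOrder α := linearOrderOfSTO (WellOrderingRel (α := α))
  obtain ⟨p, hp, hmin⟩ := Set.exists_min_image {p | u ~r p} id
    (by
      refine (u.cyclicPermutations.toFinset.finite_toSet).subset ?_
      intro p hp
      simpa [List.mem_cyclicPermutations_iff] using hp.symm)
    ⟨u, List.IsRotated.refl u⟩
  obtain ⟨k, rfl⟩ := hp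
  refine ⟨k, ?_⟩
  have hprim := h.rotate k
  set p := u.rotate k with hpdef
  have hup : u ~r p := ⟨k, rfl⟩
  intro i hi0 hi
  by_contra! hcon
  set b := p.drop i with hb
  set y := p.take i with hy
  set x := p.drop (p.length - i) with hx
  have hpyb : p = y ++ b := by simp [hy, hb]
  have hbt : b = p.take (p.length - i) := by
    apply List.ext_getElem
    · simp [hb]
    · intro j h1 h2
      have h3 : i + j < p.length := by simp [hb] at h1; omega
      have := hcon j h3
      rw [per_eq_getElem _ _ h3, per_eq_getElem _ _ (by omega)] at this
      simpa [hb] using this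
  have hpbx : p = b ++ x := by rw [hbt, hx, List.take_append_drop]
  have hlen : x.length = y.length := by simp [hx, hy]; omega
  have h1 : p ≤ b ++ y := hmin _ (hup.trans (by rw [hpyb]; exact List.isRotated_append))
  have h2 : p ≤ x ++ b := hmin _ (hup.trans (by
    have := List.isRotated_append (l := b) (l' := x)
    rwa [← hpbx] at this))
  have hxy : x = y := by
    rcases lt_trichotomy x y with hlt | heq | hgt
    · have := append_lt_append_right b x y hlen hlt
      rw [← hpyb] at this
      exact absurd h2 (not_le.2 this)
    · exact heq
    · have := append_lt_append_left b y x hgt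
      rw [← hpbx] at this
      exact absurd h1 (not_le.2 this)
  have hyne : y ≠ [] := by
    intro h0
    have := congrArg List.length h0
    rw [hy, List.length_take, List.length_nil] at this
    omega
  have hbne : b ≠ [] := by
    intro h0
    have := congrArg List.length h0
    rw [hb, List.length_drop, List.length_nil] at this
    omega
  rw [hpyb] at hprim
  refine hprim.not_commute hyne hbne ?_
  rw [← hpyb, hpbx, hxy]

/-! ### Special edges -/

section Special

variable {α : Type*} [Inhabited α]

lemma per_eq_of_perWord_eq {p p' : List α} {i i' L j : ℕ}
    (h : perWord p i L = perWord p' i' L) (hj : j < L) : per p (i + j) = per p' (i' + j) := by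
  have h1 : j < (perWord p i L).length := by simpa
  have h2 : j < (perWord p' i' L).length := by simpa
  rw [← perWord_getElem p i L j h1, ← perWord_getElem p' i' L j h2]
  simp [h]

/-- A circuit traversing the special edge of `p'` has length at least `|p'|`. -/
lemma length_le_of_perWord_eq {p p' : List α} {i q : ℕ} (hp : p ≠ []) (hub : Unbordered p')
    (hq : p'.length ≤ q) (h : perWord p i (q + 1) = perWord p' 0 (q + 1)) :
    p'.length ≤ p.length := by
  by_contra! hlt
  obtain ⟨j, hj, hne⟩ := hub p.length (List.length_pos_iff.2 hp) hlt
  apply hne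
  have h1 := per_eq_of_perWord_eq h (j := p.length + j) (by omega)
  have h2 := per_eq_of_perWord_eq h (j := j) (by omega)
  rw [zero_add] at h1 h2
  rw [← h1, ← h2, show i + (p.length + j) = i + j + p.length by ring, per_add_length]

lemma eq_rotate_of_perWord_eq {p p' : List α} {i q : ℕ} (hl : p.length = p'.length)
    (hq : p'.length ≤ q) (h : perWord p i (q + 1) = perWord p' 0 (q + 1)) :
    p' = p.rotate i := by
  apply List.ext_getElem (by simp [hl])
  intro j h1 h2
  have := per_eq_of_perWord_eq h (j := j) (by omega)
  rw [zero_add, per_eq_getElem p' j h1] at this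
  rw [← this, ← per_eq_getElem _ _ h2, per_rotate, add_comm]

/-- The circuit of an unbordered word traverses its special edge only once. -/
lemma perWord_ne {p : List α} {i q : ℕ} (hub : Unbordered p) (hq : p.length ≤ q) (h0 : 0 < i)
    (hi : i < p.length) : perWord p i (q + 1) ≠ perWord p 0 (q + 1) := by
  intro h
  obtain ⟨j, hj, hne⟩ := hub i h0 hi
  have := per_eq_of_perWord_eq h (j := j) (by omega)
  rw [zero_add] at this
  exact hne this

end Special

/-! ### Counting in the Rauzy graph -/

/-- A graph, with vertex set `V` and edges `e ∈ E` from `s e` to `t e`, has at most `|E| + 1`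
vertices if every function that is constant along all edges is constant on `V`. -/
lemma card_vertices_le {X Y : Type*} (V : Finset X) (E : Finset Y) (s t : Y → X)
    (conn : ∀ f : X → ℚ, (∀ e ∈ E, f (s e) = f (t e)) → ∀ a ∈ V, ∀ b ∈ V, f a = f b) :
    V.card ≤ E.card + 1 := by
  classical
  rcases V.eq_empty_or_nonempty with rfl | ⟨v₀, hv₀⟩
  · simp
  let ext0 : (V → ℚ) →ₗ[ℚ] (X → ℚ) :=
    { toFun := fun f x => if h : x ∈ V then f ⟨x, h⟩ else 0
      map_add' := by
        intro f g; funext x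
        by_cases h : x ∈ V <;> simp [h]
      map_smul' := by
        intro c f; funext x
        by_cases h : x ∈ V <;> simp [h] }
  let Φ : (V → ℚ) →ₗ[ℚ] (E → ℚ) × ℚ :=
    { toFun := fun f => (fun e => ext0 f (s e) - ext0 f (t e), ext0 f v₀)
      map_add' := by
        intro f g
        ext
        · simp only [map_add, Pi.add_apply, Prod.fst_add]; ring
        · simp
      map_smul' := by
        intro c f
        ext
        · simp only [map_smul, Pi.smul_apply, smul_eq_mul, RingHom.id_apply, Prod.smul_fst]; ring
        · simp }
  have hinj : Function.Injective Φ := by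
    rw [← LinearMap.ker_eq_bot, LinearMap.ker_eq_bot']
    intro f hf
    have h1 : ∀ e ∈ E, ext0 f (s e) = ext0 f (t e) := by
      intro e he
      have := congrFun (congrArg Prod.fst hf) ⟨e, he⟩
      exact sub_eq_zero.1 this
    have h2 : ext0 f v₀ = 0 := congrArg Prod.snd hf
    funext ⟨a, ha⟩
    have h3 := conn _ h1 a ha v₀ hv₀
    rw [h2] at h3
    simpa [ext0, ha] using h3
  simpa using LinearMap.finrank_le_finrank_of_injective hinj

lemma facLen_finite {α : Type*} (w : List α) (q : ℕ) : (facLen w q).Finite := by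
  classical
  refine (w.sublists.toFinset.finite_toSet).subset ?_
  rintro v ⟨-, hv⟩
  simpa using hv.sublist

lemma take_drop_mem_facLen {α : Type*} (w : List α) (i q : ℕ) (h : i + q ≤ w.length) :
    (w.drop i).take q ∈ facLen w q :=
  ⟨by simp; omega, ((List.take_prefix _ _).isInfix).trans (List.drop_suffix _ _).isInfix⟩

/-- The Rauzy graph of order `q` has cyclomatic number at least `sc_q(w)`. -/
lemma key_inequality {α : Type*} [Inhabited α] (w : List α) (q : ℕ) :
    Set.ncard {c : Set (List α) |
        ∃ u : List α, Primitive u ∧ SC w u q ∧ c = {v | Conj u v}} + (facLen w q).ncard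
      ≤ (facLen w (q + 1)).ncard + 1 := by
  classical
  set C := {c : Set (List α) |
    ∃ u : List α, Primitive u ∧ SC w u q ∧ c = {v | Conj u v}} with hC
  have hrep : ∀ c : Set (List α), ∃ p : List α, c ∈ C →
      p ≠ [] ∧ Unbordered p ∧ SC w p q ∧ c = {v | Conj p v} := by
    intro c
    by_cases hc : c ∈ C
    · obtain ⟨u, hu, hsc, rfl⟩ := hc
      obtain ⟨k, hk⟩ := exists_unbordered u hu
      refine ⟨u.rotate k, fun _ => ⟨(hu.rotate k).1, hk, SC_rotate w u hu.1 k q hsc, ?_⟩⟩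
      ext v
      have hr : u ~r u.rotate k := ⟨k, rfl⟩
      simp only [Set.mem_ofPred_eq, conj_iff_isRotated]
      exact ⟨fun h => hr.symm.trans h, fun h => hr.trans h⟩
    · exact ⟨[], fun h => absurd h hc⟩
  choose p hp using hrep
  -- a class is determined by any conjugate of its representative
  have hclass : ∀ c ∈ C, ∀ d ∈ C, ∀ i, p d = (p c).rotate i → c = d := by
    intro c hc d hd i h
    rw [(hp c hc).2.2.2, (hp d hd).2.2.2]
    have hr : p c ~r p d := ⟨i, h.symm⟩
    ext v
    simp only [Set.mem_ofPred_eq, conj_iff_isRotated]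
    exact ⟨fun h => hr.symm.trans h, fun h => hr.trans h⟩
  let e : Set (List α) → List α := fun c => perWord (p c) 0 (q + 1)
  have hedge : ∀ c ∈ C, ∀ i, perWord (p c) i (q + 1) ∈ facLen w (q + 1) := by
    intro c hc i
    exact ⟨by simp, (hp c hc).2.2.1.2.2 ((mem_perFac_iff _ (hp c hc).1 _ _).2 ⟨i, rfl⟩)⟩
  have hinj : Set.InjOn e C := by
    intro c hc d hd h
    have h1 := length_le_of_perWord_eq (hp c hc).1 (hp d hd).2.1 (hp d hd).2.2.1.1 h
    have h2 := length_le_of_perWord_eq (hp d hd).1 (hp c hc).2.1 (hp c hc).2.2.1.1 h.symm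
    exact hclass c hc d hd 0
      (eq_rotate_of_perWord_eq (le_antisymm h2 h1) (hp d hd).2.2.1.1 h)
  have hsub : e '' C ⊆ facLen w (q + 1) := by
    rintro _ ⟨c, hc, rfl⟩
    exact hedge c hc 0
  have hfin := facLen_finite w (q + 1)
  have hmain := card_vertices_le (facLen_finite w q).toFinset
    (hfin.subset (Set.sdiff_subset (t := e '' C))).toFinset
    List.dropLast List.tail ?_
  · rw [← Set.ncard_eq_toFinset_card _ (facLen_finite w q),
      ← Set.ncard_eq_toFinset_card _ (hfin.subset Set.sdiff_subset)] at hmain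
    have h1 := Set.ncard_sdiff_add_ncard_of_subset hsub hfin
    rw [hinj.ncard_image] at h1
    omega
  intro f hf
  simp only [Set.Finite.mem_toFinset] at hf ⊢
  have hspecial : ∀ m, ∀ c ∈ C, (p c).length = m →
      f (perWord (p c) 0 q) = f (perWord (p c) 1 q) := by
    intro m
    induction m using Nat.strong_induction_on with
    | _ m ih =>
    intro c hc hm
    have hpos : 0 < (p c).length := List.length_pos_iff.2 (hp c hc).1
    have hstep : ∀ i, 0 < i → i < (p c).length →
        f (perWord (p c) i q) = f (perWord (p c) (i + 1) q) := by
      intro i h0 hi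
      rw [← perWord_dropLast, ← perWord_tail]
      by_cases hs : perWord (p c) i (q + 1) ∈ e '' C
      · obtain ⟨d, hd, hde⟩ := hs
        have hle := length_le_of_perWord_eq (hp c hc).1 (hp d hd).2.1 (hp d hd).2.2.1.1 hde.symm
        rcases hle.lt_or_eq with hlt | heq
        · have := ih _ (hm ▸ hlt) d hd rfl
          rw [← hde]
          simpa only [e, perWord_dropLast, perWord_tail, zero_add] using this
        · have hcd := hclass c hc d hd i
            (eq_rotate_of_perWord_eq heq.symm (hp d hd).2.2.1.1 hde.symm)
          subst hcd
          exact absurd hde.symm (perWord_ne (hp c hc).2.1 (hp c hc).2.2.1.1 h0 hi)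
      · exact hf _ ⟨hedge c hc i, hs⟩
    -- go round the circuit from position `1` to position `|p c|`, which is position `0`
    have hwalk : ∀ i, i + 1 ≤ (p c).length →
        f (perWord (p c) 1 q) = f (perWord (p c) (i + 1) q) := by
      intro i
      induction i with
      | zero => intro _; rfl
      | succ i ih2 =>
        intro hi
        rw [ih2 (by omega), hstep (i + 1) (by omega) (by omega)]
    have := hwalk ((p c).length - 1) (by omega)
    rw [this, show (p c).length - 1 + 1 = 0 + (p c).length by omega, perWord_add_length]
  have hall : ∀ x ∈ facLen w (q + 1), f x.dropLast = f x.tail := by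
    intro x hx
    by_cases hs : x ∈ e '' C
    · obtain ⟨c, hc, rfl⟩ := hs
      simpa only [e, perWord_dropLast, perWord_tail, zero_add] using hspecial _ c hc rfl
    · exact hf x ⟨hx, hs⟩
  have hpath : ∀ i, i + q ≤ w.length → f ((w.drop i).take q) = f (w.take q) := by
    intro i
    induction i with
    | zero => intro _; simp
    | succ i ih =>
      intro hi
      have h1 := hall _ (take_drop_mem_facLen w i (q + 1) (by omega))
      rw [← ih (by omega)]
      have h2 : ((w.drop i).take (q + 1)).dropLast = (w.drop i).take q := by
        rw [List.dropLast_eq_take, List.take_take]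
        congr 1
        simp
        omega
      have h3 : ((w.drop i).take (q + 1)).tail = (w.drop (i + 1)).take q := by
        rw [← List.drop_one, List.drop_take, List.drop_drop]
        simp
      rw [h2, h3] at h1
      exact h1.symm
  have hconst : ∀ a ∈ facLen w q, f a = f (w.take q) := by
    rintro a ⟨hal, s, t, hst⟩
    have hlen := congrArg List.length hst
    simp only [List.length_append] at hlen
    have : a = (w.drop s.length).take q := by
      rw [← hst, ← hal]; simp
    rw [this]
    exact hpath _ (by omega)
  intro a ha b hb
  rw [hconst a ha, hconst b hb]

/-- The total number of small circuits, i.e. the sum over `q` from `1` to `n`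
of the number `sc_q(w)` of conjugacy classes of primitive words `u` with
`|u| ≤ q` satisfying `SC_w(u,q)`, is at most `n`. -/
theorem stmt_6 {α : Type*} (w : List α) (n : ℕ) (hn : w.length = n) :
    ∑ q ∈ Finset.Icc 1 n,
      Set.ncard {c : Set (List α) |
        ∃ u : List α, Primitive u ∧ SC w u q ∧ c = {v | Conj u v}} ≤ n := by
  rcases w.eq_nil_or_concat with rfl | ⟨_, a, _⟩
  · simp at hn
    subst hn
    simp
  have : Inhabited α := ⟨a⟩
  have key : ∀ m, ∑ q ∈ Finset.Icc 1 m,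
      Set.ncard {c : Set (List α) |
        ∃ u : List α, Primitive u ∧ SC w u q ∧ c = {v | Conj u v}} + (facLen w 1).ncard
      ≤ (facLen w (m + 1)).ncard + m := by
    intro m
    induction m with
    | zero => simp
    | succ m ih =>
      rw [Finset.sum_Icc_succ_top (by omega)]
      have := key_inequality w (m + 1)
      omega
  have hempty : facLen w (n + 1) = ∅ := by
    ext v
    simp only [Set.mem_empty_iff_false, iff_false]
    rintro ⟨h1, h2⟩
    have := h2.length_le
    omega
  have := key n
  rw [hempty, Set.ncard_empty] at this
  omega
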